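/- There exist at least 25 pairwise inequivalent s-extremal singly even self-dual [64,32,12] codes; that is, there exist at least 25 pairwise inequivalent singly even self-dual codes of length 64 with minimum weight 12 whose shadows have minimum weight 12. -/

import Mathlib

open Finset

/-- Hamming weight of a binary vector. -/
def wt {n : ℕ} (x : Fin n → ZMod 2) : ℕ := hammingNorm x

/-- The dual of a set of binary vectors with respect to the standard inner product. -/
def dualSet {n : ℕ} (C : Set (Fin n → ZMod 2)) : Set (Fin n → ZMod 2) :=
  {x | ∀ y ∈ C, ∑ i, x i * y i = 0}

/-- A binary linear code is self-dual if it equals its dual code. -/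
def IsSelfDual {n : ℕ} (C : Submodule (ZMod 2) (Fin n → ZMod 2)) : Prop :=
  (C : Set (Fin n → ZMod 2)) = dualSet (C : Set (Fin n → ZMod 2))

/-- A self-dual code is singly even if some codeword has weight not divisible by 4. -/
def IsSinglyEvenSelfDual {n : ℕ} (C : Submodule (ZMod 2) (Fin n → ZMod 2)) : Prop :=
  IsSelfDual C ∧ ∃ x ∈ C, ¬ (4 ∣ wt x)

/-- The doubly even subcode `C₀` of `C` (as a set): codewords of weight ≡ 0 (mod 4). -/
def evenSub {n : ℕ} (C : Submodule (ZMod 2) (Fin n → ZMod 2)) : Set (Fin n → ZMod 2) :=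
  {x | x ∈ C ∧ 4 ∣ wt x}

/-- The shadow `S = C₀^⊥ \ C` of a singly even self-dual code. -/
def shadow {n : ℕ} (C : Submodule (ZMod 2) (Fin n → ZMod 2)) : Set (Fin n → ZMod 2) :=
  dualSet (evenSub C) \ (C : Set (Fin n → ZMod 2))

/-- The minimum (nonzero) weight of a set of vectors. -/
noncomputable def minWtSet {n : ℕ} (S : Set (Fin n → ZMod 2)) : ℕ :=
  sInf {w | ∃ x ∈ S, x ≠ 0 ∧ wt x = w}

/-- The minimum weight of a code. -/
noncomputable def minWt {n : ℕ} (C : Submodule (ZMod 2) (Fin n → ZMod 2)) : ℕ :=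
  minWtSet (C : Set (Fin n → ZMod 2))

/-- A singly even self-dual code of length `n` is s-extremal if
`d(S) = n/2 + 4 - 2 d(C)`. -/
def IsSExtremal {n : ℕ} (C : Submodule (ZMod 2) (Fin n → ZMod 2)) : Prop :=
  IsSinglyEvenSelfDual C ∧
    (minWtSet (shadow C) : ℤ) = ((n / 2 : ℕ) : ℤ) + 4 - 2 * (minWt C : ℤ)

/-- Two codes are equivalent if one is obtained from the other by permuting coordinates. -/
def CodeEquiv {n : ℕ} (C D : Submodule (ZMod 2) (Fin n → ZMod 2)) : Prop :=
  ∃ σ : Equiv.Perm (Fin n),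
    Submodule.map (LinearMap.funLeft (ZMod 2) (ZMod 2) σ) C = D

/-- The neighbor `C₀ ∪ (t + C₀)` of `C` obtained from a shadow vector `t`:
the span of the doubly even subcode together with `t`. -/
def neighborCode {n : ℕ} (C : Submodule (ZMod 2) (Fin n → ZMod 2))
    (t : Fin n → ZMod 2) : Submodule (ZMod 2) (Fin n → ZMod 2) :=
  Submodule.span (ZMod 2) (evenSub C ∪ {t})

/-!
If `A` is orthogonal over `𝔽₂`, then `[I | A]` generates a self-dual code. If moreover the rows of
`A` have weight `1` modulo `4`, then a codeword `c` has weight `2 * (t ⬝ᵥ c)` modulo `4`, where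
`t = (0, 1)` is the indicator of the right half, so the shadow is the coset of `t`. Both the code
and its shadow are parametrized by either half of the coordinates, so a vector of weight less than
`2 * k` in one of them has a half of weight less than `k`, and only these few vectors have to be
examined. The codewords of minimum weight are found in the same way, and the sum over all pairs of
coordinates `i`, `j` of the square of the number of these words that contain both `i` and `j` is an
invariant of code equivalence. It takes 25 distinct values on the codes below, whose matrices `A`
consist of circulant blocks.

To make the examination feasible for the kernel, all vectors of low weight are handled in parallel:
a predicate on them is stored as one large number, whose bits are its values, and weights are
computed by bitwise operations on such numbers.
-/

open scoped Matrix

namespace BinaryCode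

section Weight

variable {m n : ℕ}

lemma wt_eq_sum_val (x : Fin n → ZMod 2) : wt x = ∑ i, (x i).val := by
  have h : ∀ a : ZMod 2, a.val = if a ≠ 0 then 1 else 0 := by decide
  simp only [wt, hammingNorm, card_filter, h]

lemma wt_append (x : Fin m → ZMod 2) (y : Fin n → ZMod 2) :
    wt (Fin.append x y) = wt x + wt y := by
  simp only [wt_eq_sum_val, Fin.sum_univ_add, Fin.append_left, Fin.append_right]

lemma wt_add_add_two_mul (x y : Fin n → ZMod 2) :
    wt (x + y) + 2 * wt (x * y) = wt x + wt y := by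
  have h : ∀ a b : ZMod 2, (a + b).val + 2 * (a * b).val = a.val + b.val := by decide
  simp only [wt_eq_sum_val, mul_sum, ← sum_add_distrib, Pi.add_apply, Pi.mul_apply, h]

lemma natCast_wt (x : Fin n → ZMod 2) : (wt x : ZMod 2) = ∑ i, x i := by
  simp only [wt_eq_sum_val, Nat.cast_sum, ZMod.natCast_zmod_val]

lemma even_wt_mul_iff (x y : Fin n → ZMod 2) : Even (wt (x * y)) ↔ x ⬝ᵥ y = 0 := by
  rw [← ZMod.natCast_eq_zero_iff_even, natCast_wt]
  rfl

lemma wt_comp_perm (x : Fin n → ZMod 2) (σ : Equiv.Perm (Fin n)) : wt (x ∘ σ) = wt x := by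
  simp only [wt_eq_sum_val, Function.comp_apply]
  exact Equiv.sum_comp σ fun i ↦ (x i).val

lemma minWtSet_eq {S : Set (Fin n → ZMod 2)} {d : ℕ} (hS : ∀ x ∈ S, x ≠ 0 → d ≤ wt x)
    (hd : ∃ x ∈ S, x ≠ 0 ∧ wt x = d) : minWtSet S = d := by
  refine le_antisymm (Nat.sInf_le hd) (le_csInf ⟨d, hd⟩ ?_)
  rintro _ ⟨x, hx, hx0, rfl⟩
  exact hS x hx hx0

end Weight

section Shadow

variable {n : ℕ} {C : Submodule (ZMod 2) (Fin n → ZMod 2)}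

lemma wt_mod_four_of_mem_span {s : Set (Fin n → ZMod 2)} {t : Fin n → ZMod 2}
    (hs : ∀ x ∈ Submodule.span (ZMod 2) s, ∀ y ∈ Submodule.span (ZMod 2) s, x ⬝ᵥ y = 0)
    (ht : ∀ x ∈ s, wt x % 4 = 2 * (t ⬝ᵥ x).val) {c : Fin n → ZMod 2}
    (hc : c ∈ Submodule.span (ZMod 2) s) : wt c % 4 = 2 * (t ⬝ᵥ c).val := by
  have smul_mem : ∀ (a : ZMod 2) (x : Fin n → ZMod 2), wt x % 4 = 2 * (t ⬝ᵥ x).val →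
      wt (a • x) % 4 = 2 * (t ⬝ᵥ (a • x)).val := by
    intro a x hx
    rcases (by decide : ∀ a : ZMod 2, a = 0 ∨ a = 1) a with rfl | rfl
    · simp [wt]
    · simpa using hx
  induction hc using Submodule.span_induction with
  | mem x hx => exact ht x hx
  | zero => simp [wt]
  | smul a x _ hx => exact smul_mem a x hx
  | add x y hx hy ihx ihy =>
    obtain ⟨r, hr⟩ := (even_wt_mul_iff x y).2 (hs x hx y hy)
    have hval : ∀ a b : ZMod 2, 2 * (a + b).val % 4 = (2 * a.val + 2 * b.val) % 4 := by decide
    have hadd := wt_add_add_two_mul x y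
    have := hval (t ⬝ᵥ x) (t ⬝ᵥ y)
    have := ZMod.val_lt (t ⬝ᵥ x + t ⬝ᵥ y)
    rw [dotProduct_add]
    omega

lemma shadow_eq_of_four_dvd_wt_iff (hC : IsSinglyEvenSelfDual C) {t : Fin n → ZMod 2}
    (ht : ∀ c ∈ C, 4 ∣ wt c ↔ t ⬝ᵥ c = 0) : shadow C = {x | x + t ∈ C} := by
  obtain ⟨hdual, z, hz, hwz⟩ := hC
  have mem_iff (x : Fin n → ZMod 2) : x ∈ C ↔ ∀ y ∈ C, x ⬝ᵥ y = 0 := Set.ext_iff.1 hdual x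
  have add_eq_zero {a b : ZMod 2} (ha : a ≠ 0) (hb : b ≠ 0) : a + b = 0 := by
    revert a b; decide
  ext x
  constructor
  · rintro ⟨hx, hxC⟩
    obtain ⟨y, hy, hxy⟩ : ∃ y ∈ C, x ⬝ᵥ y ≠ 0 := by
      by_contra! h
      exact hxC ((mem_iff x).2 h)
    have hty : t ⬝ᵥ y ≠ 0 := fun h ↦ hxy (hx y ⟨hy, (ht y hy).2 h⟩)
    refine (mem_iff _).2 fun c hc ↦ ?_
    rw [add_dotProduct]
    by_cases htc : t ⬝ᵥ c = 0
    · rw [htc, add_zero]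
      exact hx c ⟨hc, (ht c hc).2 htc⟩
    · have hyc : t ⬝ᵥ (c + y) = 0 := by rw [dotProduct_add, add_eq_zero htc hty]
      have hxyc : x ⬝ᵥ (c + y) = 0 := hx _ ⟨C.add_mem hc hy, (ht _ (C.add_mem hc hy)).2 hyc⟩
      rw [dotProduct_add] at hxyc
      exact add_eq_zero (fun h ↦ hxy (by simpa [h] using hxyc)) htc
  · intro hx
    refine ⟨fun y hy ↦ ?_, fun hxC ↦ hwz ?_⟩
    · have := (mem_iff _).1 hx y hy.1
      rwa [add_dotProduct, (ht y hy.1).1 hy.2, add_zero] at this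
    · have htC : t ∈ C := (C.add_mem_iff_right hxC).1 hx
      exact (ht z hz).2 ((mem_iff t).1 htC z hz)

end Shadow

section Invariant

variable {n : ℕ}

open Classical in
/-- The number of codewords of weight `w` whose support contains both `i` and `j`. -/
noncomputable def pairCount (C : Submodule (ZMod 2) (Fin n → ZMod 2)) (w : ℕ) (i j : Fin n) : ℕ :=
  #{c | c ∈ C ∧ wt c = w ∧ c i = 1 ∧ c j = 1}

lemma pairCount_map_funLeft (C : Submodule (ZMod 2) (Fin n → ZMod 2)) (w : ℕ)
    (σ : Equiv.Perm (Fin n)) (i j : Fin n) :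
    pairCount (C.map (LinearMap.funLeft (ZMod 2) (ZMod 2) σ)) w i j =
      pairCount C w (σ i) (σ j) := by
  classical
  symm
  refine card_equiv (Equiv.arrowCongr σ.symm (Equiv.refl _)) fun c ↦ ?_
  have hc : Equiv.arrowCongr σ.symm (Equiv.refl _) c = LinearMap.funLeft (ZMod 2) (ZMod 2) σ c :=
    rfl
  have hwt : wt (LinearMap.funLeft (ZMod 2) (ZMod 2) σ c) = wt c := wt_comp_perm c σ
  simp only [mem_filter_univ, hc, hwt, LinearMap.funLeft_apply, Submodule.mem_map,
    (LinearMap.funLeft_injective_of_surjective (ZMod 2) (ZMod 2) _ σ.surjective).eq_iff,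
    exists_eq_right]

/-- The sum of the squares of the pair counts, an invariant of code equivalence. -/
noncomputable def pairCountSq (C : Submodule (ZMod 2) (Fin n → ZMod 2)) (w : ℕ) : ℕ :=
  ∑ i, ∑ j, pairCount C w i j ^ 2

lemma pairCountSq_eq_of_codeEquiv {C D : Submodule (ZMod 2) (Fin n → ZMod 2)}
    (h : CodeEquiv C D) (w : ℕ) : pairCountSq C w = pairCountSq D w := by
  obtain ⟨σ, rfl⟩ := h
  simp only [pairCountSq, pairCount_map_funLeft]
  rw [Equiv.sum_comp σ fun i ↦ ∑ j, pairCount C w i (σ j) ^ 2]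
  exact sum_congr rfl fun i _ ↦ (Equiv.sum_comp σ fun j ↦ pairCount C w i j ^ 2).symm

end Invariant

section Encode

variable {n : ℕ} {A : Matrix (Fin n) (Fin n) (ZMod 2)} {b : Fin n → ZMod 2}

/-- The systematic encoder of the generator matrix `[I | A]`, with the check symbols translated by
`b`: for `b = 0` it parametrizes the code generated by `[I | A]`, in general a coset of it. -/
def encode (A : Matrix (Fin n) (Fin n) (ZMod 2)) (b x : Fin n → ZMod 2) : Fin (n + n) → ZMod 2 :=
  Fin.append x (b + x ᵥ* A)

lemma encode_add_encode_zero (A : Matrix (Fin n) (Fin n) (ZMod 2)) (b x y : Fin n → ZMod 2) :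
    encode A b x + encode A 0 y = encode A b (x + y) := by
  ext i
  refine Fin.addCases (fun i ↦ ?_) (fun i ↦ ?_) i
  · simp only [encode, Pi.add_apply, Fin.append_left]
  · simp only [encode, Pi.add_apply, Fin.append_right, Matrix.add_vecMul, zero_add, add_assoc]

lemma encode_injective (A : Matrix (Fin n) (Fin n) (ZMod 2)) (b : Fin n → ZMod 2) :
    Function.Injective (encode A b) := fun x y h ↦ by
  ext i
  simpa [encode] using congrFun h (Fin.castAdd n i)

/-- The code generated by `[I | A]`. -/
def code (A : Matrix (Fin n) (Fin n) (ZMod 2)) : Submodule (ZMod 2) (Fin (n + n) → ZMod 2) :=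
  LinearMap.range (AddMonoidHom.toZModLinearMap 2
    (AddMonoidHom.mk' (encode A 0) fun x y ↦ (encode_add_encode_zero A 0 x y).symm))

lemma coe_code (A : Matrix (Fin n) (Fin n) (ZMod 2)) :
    (code A : Set (Fin (n + n) → ZMod 2)) = Set.range (encode A 0) :=
  rfl

lemma finrank_code (A : Matrix (Fin n) (Fin n) (ZMod 2)) :
    Module.finrank (ZMod 2) (code A) = n := by
  rw [code, LinearMap.finrank_range_of_inj (encode_injective A 0), Module.finrank_fin_fun]

lemma code_eq_span (A : Matrix (Fin n) (Fin n) (ZMod 2)) :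
    code A = Submodule.span (ZMod 2) (Set.range fun i ↦ encode A 0 (Pi.single i 1)) := by
  rw [code, LinearMap.range_eq_map, ← (Pi.basisFun (ZMod 2) (Fin n)).span_eq, Submodule.map_span,
    ← Set.range_comp]
  congr 2
  ext1 i
  simp

lemma append_dotProduct_append (u w u' w' : Fin n → ZMod 2) :
    Fin.append u w ⬝ᵥ Fin.append u' w' = u ⬝ᵥ u' + w ⬝ᵥ w' := by
  simp only [dotProduct, Fin.sum_univ_add, Fin.append_left, Fin.append_right]

lemma encode_dotProduct_encode (hA : A * Aᵀ = 1) (x y : Fin n → ZMod 2) :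
    encode A 0 x ⬝ᵥ encode A 0 y = 0 := by
  have h : (x ᵥ* A) ⬝ᵥ (y ᵥ* A) = x ⬝ᵥ y := by
    rw [← Matrix.dotProduct_mulVec, ← Matrix.mulVec_transpose, Matrix.mulVec_mulVec, hA,
      Matrix.one_mulVec]
  rw [encode, encode, zero_add, zero_add, append_dotProduct_append, h, CharTwo.add_self_eq_zero]

lemma isSelfDual_code (hA : A * Aᵀ = 1) : IsSelfDual (code A) := by
  refine Set.Subset.antisymm ?_ fun v hv ↦ ?_
  · rintro _ ⟨x, rfl⟩ _ ⟨y, rfl⟩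
    exact encode_dotProduct_encode hA x y
  · obtain ⟨u, w, rfl⟩ : ∃ u w, v = Fin.append u w := ⟨_, _, Fin.append_castAdd_natAdd.symm⟩
    have hu : u = A *ᵥ w := by
      refine dotProduct_eq u _ fun x ↦ ?_
      have hx : u ⬝ᵥ x + w ⬝ᵥ (x ᵥ* A) = 0 := by
        rw [← append_dotProduct_append, ← zero_add (x ᵥ* A)]
        exact hv _ ⟨x, rfl⟩
      rw [CharTwo.add_eq_zero.1 hx, dotProduct_comm w, ← Matrix.dotProduct_mulVec, dotProduct_comm]
    refine ⟨u, ?_⟩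
    change Fin.append u (0 + u ᵥ* A) = _
    rw [zero_add, hu, ← Matrix.mulVec_transpose, Matrix.mulVec_mulVec, mul_eq_one_comm.1 hA,
      Matrix.one_mulVec]

lemma wt_encode (A : Matrix (Fin n) (Fin n) (ZMod 2)) (b x : Fin n → ZMod 2) :
    wt (encode A b x) = wt x + wt (b + x ᵥ* A) :=
  wt_append _ _

lemma encode_zero_single (A : Matrix (Fin n) (Fin n) (ZMod 2)) (i : Fin n) :
    encode A 0 (Pi.single i 1) = Fin.append (Pi.single i 1) (A i) := by
  rw [encode, zero_add, Matrix.single_one_vecMul, Matrix.row_def]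

lemma wt_encode_zero_single (A : Matrix (Fin n) (Fin n) (ZMod 2)) (i : Fin n) :
    wt (encode A 0 (Pi.single i 1)) = 1 + wt (A i) := by
  rw [encode_zero_single, wt_append, wt_eq_sum_val (Pi.single i 1)]
  simp [Pi.single_apply, apply_ite ZMod.val, ZMod.val_one]

lemma natCast_wt_of_mod_four_eq_one {v : Fin n → ZMod 2} (hv : wt v % 4 = 1) :
    (wt v : ZMod 2) = 1 := by
  rw [ZMod.natCast_eq_one_iff_odd, Nat.odd_iff]
  omega

lemma wt_mod_four_of_mem_code (hA : A * Aᵀ = 1) (hrow : ∀ i, wt (A i) % 4 = 1)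
    {c : Fin (n + n) → ZMod 2} (hc : c ∈ code A) :
    wt c % 4 = 2 * (encode A 1 0 ⬝ᵥ c).val := by
  rw [code_eq_span] at hc
  refine wt_mod_four_of_mem_span ?_ ?_ hc
  · rw [← code_eq_span]
    rintro _ ⟨x, rfl⟩ _ ⟨y, rfl⟩
    exact encode_dotProduct_encode hA x y
  · rintro _ ⟨i, rfl⟩
    have hdot : encode A 1 0 ⬝ᵥ encode A 0 (Pi.single i 1) = 1 := by
      rw [encode_zero_single, encode, append_dotProduct_append, Matrix.zero_vecMul, add_zero,
        zero_dotProduct, one_dotProduct, zero_add, ← natCast_wt,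
        natCast_wt_of_mod_four_eq_one (hrow i)]
    rw [hdot, ZMod.val_one, wt_encode_zero_single]
    have := hrow i
    omega

lemma isSinglyEvenSelfDual_code [NeZero n] (hA : A * Aᵀ = 1) (hrow : ∀ i, wt (A i) % 4 = 1) :
    IsSinglyEvenSelfDual (code A) := by
  refine ⟨isSelfDual_code hA, encode A 0 (Pi.single 0 1), ⟨_, rfl⟩, ?_⟩
  rw [wt_encode_zero_single]
  have := hrow 0
  omega

lemma shadow_code [NeZero n] (hA : A * Aᵀ = 1) (hrow : ∀ i, wt (A i) % 4 = 1) :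
    shadow (code A) = Set.range (encode A 1) := by
  have ht : ∀ c ∈ code A, 4 ∣ wt c ↔ encode A 1 0 ⬝ᵥ c = 0 := fun c hc ↦ by
    have hval := wt_mod_four_of_mem_code hA hrow hc
    have := ZMod.val_lt (encode A 1 0 ⬝ᵥ c)
    rw [← ZMod.val_eq_zero]
    omega
  rw [shadow_eq_of_four_dvd_wt_iff (isSinglyEvenSelfDual_code hA hrow) ht]
  ext v
  refine exists_congr fun x ↦ ?_
  change encode A 0 x = v + encode A 1 0 ↔ _
  rw [← CharTwo.sub_eq_add v, eq_sub_iff_add_eq, add_comm (encode A 0 x),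
    encode_add_encode_zero, zero_add x]

/-- The parametrization of `Set.range (encode A b)` by the second half of the coordinates. -/
def encodeRight (A : Matrix (Fin n) (Fin n) (ZMod 2)) (b y : Fin n → ZMod 2) :
    Fin (n + n) → ZMod 2 :=
  Fin.append (b + y ᵥ* Aᵀ) y

lemma encodeRight_injective (A : Matrix (Fin n) (Fin n) (ZMod 2)) (b : Fin n → ZMod 2) :
    Function.Injective (encodeRight A b) := fun x y h ↦ by
  ext i
  simpa only [encodeRight, Fin.append_right] using congrFun h (Fin.natAdd n i)

lemma wt_encodeRight (A : Matrix (Fin n) (Fin n) (ZMod 2)) (b y : Fin n → ZMod 2) :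
    wt (encodeRight A b y) = wt (encode Aᵀ b y) := by
  rw [wt_encode, encodeRight, wt_append, add_comm]

lemma add_add_cancel_left (x y : Fin n → ZMod 2) : x + (x + y) = y := by
  rw [← add_assoc, ZModModule.add_self, zero_add]

lemma encode_eq_encodeRight (hA : A * Aᵀ = 1) (hb : b ᵥ* Aᵀ = b) (x : Fin n → ZMod 2) :
    encode A b x = encodeRight A b (b + x ᵥ* A) := by
  rw [encode, encodeRight, Matrix.add_vecMul, hb, Matrix.vecMul_vecMul, hA, Matrix.vecMul_one,
    add_add_cancel_left]

lemma range_encodeRight (hA : A * Aᵀ = 1) (hb : b ᵥ* Aᵀ = b) :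
    Set.range (encodeRight A b) = Set.range (encode A b) := by
  refine Set.Subset.antisymm ?_ ?_
  · rintro _ ⟨y, rfl⟩
    refine ⟨b + y ᵥ* Aᵀ, ?_⟩
    have hbA : b ᵥ* A = b := by
      rw [← hb, Matrix.vecMul_vecMul, mul_eq_one_comm.1 hA, Matrix.vecMul_one, hb]
    rw [encode_eq_encodeRight hA hb, Matrix.add_vecMul, hbA, Matrix.vecMul_vecMul,
      mul_eq_one_comm.1 hA, Matrix.vecMul_one, add_add_cancel_left]
  · rintro _ ⟨x, rfl⟩
    exact ⟨_, (encode_eq_encodeRight hA hb x).symm⟩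

lemma one_vecMul_transpose (hrow : ∀ i, wt (A i) % 4 = 1) : 1 ᵥ* Aᵀ = 1 := by
  ext i
  rw [Matrix.vecMul_transpose, Matrix.mulVec, dotProduct_one, ← natCast_wt,
    natCast_wt_of_mod_four_eq_one (hrow i), Pi.one_apply]

lemma minWtSet_range_encode (hA : A * Aᵀ = 1) (hb : b ᵥ* Aᵀ = b) {k : ℕ}
    (hleft : ∀ x, wt x < k → encode A b x ≠ 0 → 2 * k ≤ wt (encode A b x))
    (hright : ∀ y, wt y < k → encode Aᵀ b y ≠ 0 → 2 * k ≤ wt (encode Aᵀ b y))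
    (hmin : ∃ x, encode A b x ≠ 0 ∧ wt (encode A b x) = 2 * k) :
    minWtSet (Set.range (encode A b)) = 2 * k := by
  refine minWtSet_eq ?_ (by simpa using hmin)
  rintro _ ⟨x, rfl⟩ hx
  have ne_zero_iff {v : Fin (n + n) → ZMod 2} : v ≠ 0 ↔ wt v ≠ 0 := hammingNorm_ne_zero_iff.symm
  by_contra! hlt
  rcases lt_or_ge (wt x) k with hk | hk
  · exact hlt.not_ge (hleft x hk hx)
  · rw [encode_eq_encodeRight hA hb, wt_encodeRight] at hlt
    rw [encode_eq_encodeRight hA hb, ne_zero_iff, wt_encodeRight, ← ne_zero_iff] at hx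
    refine hlt.not_ge (hright _ ?_ hx)
    rw [← wt_encodeRight, ← encode_eq_encodeRight hA hb, wt_encode] at hlt
    omega

end Encode

section TruthTable

variable {α β : Type*} {p q : α → Bool} {l : List α}

/-- The bit string of the values of `p` along `l`, as a number whose least significant bit is the
value at the head of `l`. -/
def truthTable (p : α → Bool) (l : List α) : ℕ :=
  Nat.ofBits fun i : Fin l.length ↦ p l[i]

lemma testBit_truthTable (p : α → Bool) (l : List α) (i : ℕ) :
    (truthTable p l).testBit i = l[i]?.any p := by
  by_cases hi : i < l.length
  · simp [truthTable, Nat.testBit_ofBits_lt, hi]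
  · simp [truthTable, Nat.testBit_ofBits_ge, hi, not_lt.1 hi]

lemma truthTable_nil (p : α → Bool) : truthTable p [] = 0 :=
  Nat.eq_of_testBit_eq fun i ↦ by simp [testBit_truthTable]

lemma truthTable_map (p : β → Bool) (f : α → β) (l : List α) :
    truthTable p (l.map f) = truthTable (p ∘ f) l :=
  Nat.eq_of_testBit_eq fun i ↦ by
    simp [testBit_truthTable, Option.any_map, Function.comp_def]

lemma truthTable_append (p : α → Bool) (l₁ l₂ : List α) :
    truthTable p (l₁ ++ l₂) = truthTable p l₁ ||| truthTable p l₂ <<< l₁.length :=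
  Nat.eq_of_testBit_eq fun i ↦ by
    rcases lt_or_ge i l₁.length with hi | hi
    · simp [testBit_truthTable, hi, List.getElem?_append_left, hi.not_ge]
    · simp [testBit_truthTable, hi, List.getElem?_append_right]

lemma truthTable_append_mod (p : α → Bool) (l₁ l₂ : List α) :
    truthTable p (l₁ ++ l₂) % 2 ^ l₁.length = truthTable p l₁ :=
  Nat.eq_of_testBit_eq fun i ↦ by
    rcases lt_or_ge i l₁.length with hi | hi
    · simp [testBit_truthTable, hi, List.getElem?_append_left]
    · simp [testBit_truthTable, hi.not_gt]

lemma truthTable_append_shiftRight (p : α → Bool) (l₁ l₂ : List α) :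
    truthTable p (l₁ ++ l₂) >>> l₁.length = truthTable p l₂ :=
  Nat.eq_of_testBit_eq fun i ↦ by simp [testBit_truthTable, List.getElem?_append_right]

lemma truthTable_true (l : List α) : truthTable (fun _ ↦ true) l = 1 <<< l.length - 1 :=
  Nat.eq_of_testBit_eq fun i ↦ by
    rcases lt_or_ge i l.length with hi | hi
    · simp [testBit_truthTable, Nat.one_shiftLeft, hi]
    · simp [testBit_truthTable, Nat.one_shiftLeft, hi]

lemma truthTable_false (l : List α) : truthTable (fun _ ↦ false) l = 0 :=
  Nat.eq_of_testBit_eq fun i ↦ by simp [testBit_truthTable]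

lemma truthTable_and (p q : α → Bool) (l : List α) :
    truthTable p l &&& truthTable q l = truthTable (fun a ↦ p a && q a) l :=
  Nat.eq_of_testBit_eq fun i ↦ by cases h : l[i]? <;> simp [testBit_truthTable, h]

lemma truthTable_or (p q : α → Bool) (l : List α) :
    truthTable p l ||| truthTable q l = truthTable (fun a ↦ p a || q a) l :=
  Nat.eq_of_testBit_eq fun i ↦ by cases h : l[i]? <;> simp [testBit_truthTable, h]

lemma truthTable_xor (p q : α → Bool) (l : List α) :
    truthTable p l ^^^ truthTable q l = truthTable (fun a ↦ p a ^^ q a) l :=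
  Nat.eq_of_testBit_eq fun i ↦ by cases h : l[i]? <;> simp [testBit_truthTable, h]

lemma truthTable_inj : truthTable p l = truthTable q l ↔ ∀ a ∈ l, p a = q a := by
  refine ⟨fun h a ha ↦ ?_, fun h ↦ Nat.eq_of_testBit_eq fun i ↦ ?_⟩
  · obtain ⟨i, hi⟩ := List.mem_iff_getElem?.1 ha
    simpa [testBit_truthTable, hi] using congrArg (Nat.testBit · i) h
  · cases hi : l[i]? with
    | none => simp [testBit_truthTable, hi]
    | some a => simp [testBit_truthTable, hi, h a (List.mem_of_getElem? hi)]

end TruthTable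

section LightVectors

open Matrix (vecCons)

/-- The list of all vectors of weight less than `k` and length `n`. -/
def lightVectors : ℕ → (n : ℕ) → List (Fin n → ZMod 2)
  | 0, _ => []
  | _ + 1, 0 => [![]]
  | k + 1, n + 1 => (lightVectors (k + 1) n).map (vecCons 0) ++ (lightVectors k n).map (vecCons 1)

lemma lightVectors_zero (n : ℕ) : lightVectors 0 n = [] := by
  cases n <;> rfl

lemma wt_vecCons {n : ℕ} (a : ZMod 2) (x : Fin n → ZMod 2) : wt (vecCons a x) = a.val + wt x := by
  simp only [wt_eq_sum_val, Fin.sum_univ_succ, Matrix.cons_val_zero, Matrix.cons_val_succ]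

lemma mem_lightVectors (k : ℕ) {n : ℕ} (x : Fin n → ZMod 2) : x ∈ lightVectors k n ↔ wt x < k := by
  induction n generalizing k with
  | zero => cases k <;> simp [lightVectors, wt_eq_sum_val, eq_iff_true_of_subsingleton]
  | succ n ih =>
    cases k with
    | zero => simp [lightVectors]
    | succ k =>
      revert x
      refine Fin.forall_fin_succ_pi.2 fun a x ↦ ?_
      change vecCons a x ∈ _ ↔ wt (vecCons a x) < _
      have hval : a = 0 ∨ a = 1 := by revert a; decide
      rcases hval with rfl | rfl <;>
        simp [lightVectors, wt_vecCons, Matrix.vecCons_inj, ih, ZMod.val_one, add_comm]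

lemma nodup_lightVectors (k n : ℕ) : (lightVectors k n).Nodup := by
  induction n generalizing k with
  | zero => cases k <;> simp [lightVectors]
  | succ n ih =>
    cases k with
    | zero => simp [lightVectors]
    | succ k =>
      have hinj (a : ZMod 2) : Function.Injective (vecCons (n := n) a) := fun x y h ↦
        (Matrix.vecCons_inj.1 h).2
      refine ((ih _).map (hinj 0)).append ((ih _).map (hinj 1)) ?_
      simp [List.disjoint_left, Matrix.vecCons_inj]

end LightVectors

section Tables

open Matrix (vecCons)

lemma zipWith_tail_map_range {α β : Type*} (g : α → α → β) (F : ℕ → α) (k : ℕ) :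
    List.zipWith g ((List.range (k + 1)).map F) ((List.range (k + 1)).map F).tail =
      (List.range k).map fun e ↦ g (F e) (F (e + 1)) :=
  List.ext_getElem (by simp) fun i _ _ ↦ by simp

lemma zipWith_ofFn {α β γ : Type*} {n : ℕ} (g : α → β → γ) (f : Fin n → α) (f' : Fin n → β) :
    List.zipWith g (List.ofFn f) (List.ofFn f') = List.ofFn fun i ↦ g (f i) (f' i) :=
  List.ext_getElem (by simp) fun i _ _ ↦ by simp

/-- The length of a list of vectors of length `n`, with the truth tables of their coordinates. -/
def coordTable {n : ℕ} (l : List (Fin n → ZMod 2)) : ℕ × List ℕ :=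
  (l.length, List.ofFn fun i ↦ truthTable (fun x ↦ x i = 1) l)

/-- The coordinate table of `lightVectors (k + 1) (n + 1)`, computed from those of
`lightVectors k n` and `lightVectors (k + 1) n`. -/
def pascalStep (p q : ℕ × List ℕ) : ℕ × List ℕ :=
  (q.1 + p.1, ((1 <<< p.1 - 1) <<< q.1) :: List.zipWith (fun s t ↦ t ||| s <<< q.1) p.2 q.2)

lemma coordTable_lightVectors_succ (k n : ℕ) : coordTable (lightVectors (k + 1) (n + 1)) =
    pascalStep (coordTable (lightVectors k n)) (coordTable (lightVectors (k + 1) n)) := by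
  simp only [coordTable, pascalStep, lightVectors, List.ofFn_succ, zipWith_ofFn,
    List.length_append, List.length_map, truthTable_append, truthTable_map, Function.comp_def,
    Matrix.cons_val_zero, Matrix.cons_val_succ, zero_ne_one, decide_true, decide_false,
    truthTable_false, truthTable_true, Nat.zero_or]

/-- The coordinate tables of `lightVectors j n` for `j ≤ k`. -/
def coordTables (k : ℕ) : ℕ → List (ℕ × List ℕ)
  | 0 => (0, []) :: List.replicate k (1, [])
  | n + 1 => (0, List.replicate (n + 1) 0) ::
      List.zipWith pascalStep (coordTables k n) (coordTables k n).tail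

lemma coordTables_eq (k n : ℕ) :
    coordTables k n = (List.range (k + 1)).map fun j ↦ coordTable (lightVectors j n) := by
  have h0 (n : ℕ) : coordTable (lightVectors 0 n) = (0, List.replicate n 0) := by
    simp [coordTable, lightVectors_zero, truthTable_nil, List.ofFn_const]
  induction n with
  | zero =>
    simp [coordTables, coordTable, lightVectors, List.range_succ_eq_map, List.map_const',
      Function.comp_def]
  | succ n ih =>
    rw [coordTables, ih, zipWith_tail_map_range]
    simp only [List.range_succ_eq_map, List.map_cons, List.map_map, Function.comp_def, h0,
      coordTable_lightVectors_succ]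

/-- The 0/1 matrix of a Boolean matrix; the certificates are evaluated on Boolean matrices because
the kernel computes faster with `Bool` than with `ZMod 2`. -/
def ofBool {m n : ℕ} (a : Fin m → Fin n → Bool) : Matrix (Fin m) (Fin n) (ZMod 2) :=
  Matrix.of fun i j ↦ bif a i j then 1 else 0

lemma truthTable_add {α : Type*} (f g : α → ZMod 2) (l : List α) :
    truthTable (fun x ↦ f x + g x = 1) l =
      truthTable (fun x ↦ f x = 1) l ^^^ truthTable (fun x ↦ g x = 1) l := by
  have h : ∀ a b : ZMod 2, decide (a + b = 1) = (decide (a = 1) ^^ decide (b = 1)) := by decide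
  simp only [h, truthTable_xor]

lemma truthTable_add_sum {α : Type*} {n : ℕ} (f : α → ZMod 2) (g : Fin n → α → ZMod 2)
    (l : List α) : truthTable (fun x ↦ f x + ∑ i, g i x = 1) l =
      (List.ofFn fun i ↦ truthTable (fun x ↦ g i x = 1) l).foldl (· ^^^ ·)
        (truthTable (fun x ↦ f x = 1) l) := by
  induction n generalizing f with
  | zero => simp
  | succ n ih =>
    simp only [Fin.sum_univ_succ, ← add_assoc, List.ofFn_succ, List.foldl_cons, ← truthTable_add]
    exact ih (fun x ↦ f x + g 0 x) _

/-- The truth tables of the coordinates of `b + x ᵥ* ofBool a`, computed from the table `t` of those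
of `x`; here `b` is the all-zero or the all-one vector. -/
def checkTables {n : ℕ} (a : Fin n → Fin n → Bool) (b : Bool) (t : ℕ × List ℕ) : List ℕ :=
  List.ofFn fun j ↦
    (List.zipWith (fun c s ↦ bif c then s else 0) (List.ofFn fun i ↦ a i j) t.2).foldl (· ^^^ ·)
      (bif b then 1 <<< t.1 - 1 else 0)

lemma checkTables_coordTable {n : ℕ} (a : Fin n → Fin n → Bool) (b : Bool)
    (l : List (Fin n → ZMod 2)) : checkTables a b (coordTable l) = List.ofFn fun j ↦
      truthTable (fun x ↦ ((bif b then 1 else 0 : Fin n → ZMod 2) + x ᵥ* ofBool a) j = 1) l := by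
  have hb (j : Fin n) : (bif b then 1 <<< l.length - 1 else 0) =
      truthTable (fun _ ↦ (bif b then 1 else 0 : Fin n → ZMod 2) j = 1) l := by
    cases b <;> simp [truthTable_true, truthTable_false]
  have ha (i j : Fin n) : (bif a i j then truthTable (fun x ↦ x i = 1) l else 0) =
      truthTable (fun x : Fin n → ZMod 2 ↦ x i * ofBool a i j = 1) l := by
    cases h : a i j <;> simp [ofBool, h, truthTable_false]
  refine congrArg List.ofFn (funext fun j ↦ ?_)
  simp only [coordTable, zipWith_ofFn, ha]
  rw [hb j, ← truthTable_add_sum]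
  rfl

/-- The truth tables of the predicates that at least `e` of the columns `cols` hold, for `e ≤ d`,
where `full` is the truth table of the constant `true`. -/
def countTables (full d : ℕ) : List ℕ → List ℕ
  | [] => full :: List.replicate d 0
  | c :: cols => full ::
      List.zipWith (fun s t ↦ t ||| s &&& c) (countTables full d cols)
        (countTables full d cols).tail

lemma countTables_map {α ι : Type*} (p : ι → α → Bool) (d : ℕ) (I : List ι) (l : List α) :
    countTables (1 <<< l.length - 1) d (I.map fun i ↦ truthTable (p i) l) =
      (List.range (d + 1)).map fun e ↦ truthTable (fun x ↦ e ≤ I.countP (p · x)) l := by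
  induction I with
  | nil =>
    simp [countTables, truthTable_false, truthTable_true, List.range_succ_eq_map, List.map_const',
      Function.comp_def]
  | cons i I ih =>
    rw [List.map_cons, countTables, ih, zipWith_tail_map_range, List.range_succ_eq_map,
      List.map_cons, List.map_map]
    simp only [Nat.zero_le, decide_true, truthTable_true, truthTable_and, truthTable_or,
      Function.comp_def]
    congr! 5 with e x
    rw [List.countP_cons]
    grind

lemma wt_eq_countP {n : ℕ} (x : Fin n → ZMod 2) : wt x = (List.finRange n).countP (x · = 1) := by
  have h : ∀ a : ZMod 2, a ≠ 0 ↔ a = 1 := by decide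
  simp only [wt, hammingNorm, h, Fin.univ_def, card_def, filter_val, Multiset.filter_coe,
    Multiset.coe_card, List.countP_eq_length_filter]

/-- The truth tables of the predicates `e ≤ wt (encode (ofBool a) b x)` for `e ≤ d`, computed from
the table of the coordinates of `x`. -/
def weightTables {n : ℕ} (a : Fin n → Fin n → Bool) (b : Bool) (d : ℕ) (t : ℕ × List ℕ) : List ℕ :=
  countTables (1 <<< t.1 - 1) d (t.2 ++ checkTables a b t)

lemma weightTables_coordTable {n : ℕ} (a : Fin n → Fin n → Bool) (b : Bool) (d : ℕ)
    (l : List (Fin n → ZMod 2)) : weightTables a b d (coordTable l) =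
      (List.range (d + 1)).map fun e ↦
        truthTable (fun x ↦ e ≤ wt (encode (ofBool a) (bif b then 1 else 0) x)) l := by
  have hcols : (coordTable l).2 ++ checkTables a b (coordTable l) =
      (List.finRange (n + n)).map fun i ↦
        truthTable (fun x ↦ encode (ofBool a) (bif b then 1 else 0) x i = 1) l := by
    rw [checkTables_coordTable, coordTable, ← List.ofFn_eq_map, List.ofFn_add]
    simp only [encode, Fin.append_left', Fin.append_right]
  rw [weightTables, hcols, coordTable, countTables_map]
  simp only [wt_eq_countP]

end Tables

section Select

variable {m n : ℕ}

/-- A vector as a number whose bits are its coordinates. -/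
def word (v : Fin n → ZMod 2) : ℕ :=
  Nat.ofBits fun i ↦ v i = 1

lemma testBit_word (v : Fin n → ZMod 2) (i : Fin n) : (word v).testBit i = decide (v i = 1) := by
  simp [word, Nat.testBit_ofBits_lt]

lemma word_lt (v : Fin n → ZMod 2) : word v < 2 ^ n :=
  Nat.ofBits_lt_two_pow _

lemma word_zero : word (0 : Fin n → ZMod 2) = 0 :=
  Nat.eq_of_testBit_eq fun i ↦ by simp [word, Nat.testBit_ofBits]

lemma word_add (u v : Fin n → ZMod 2) : word (u + v) = word u ^^^ word v := by
  have h : ∀ a b : ZMod 2, decide (a + b = 1) = (decide (a = 1) ^^ decide (b = 1)) := by decide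
  refine Nat.eq_of_testBit_eq fun i ↦ ?_
  rcases lt_or_ge i n with hi | hi
  · simp [word, Nat.testBit_ofBits_lt, hi, h]
  · simp [word, Nat.testBit_ofBits_ge, hi]

lemma word_append (u : Fin m → ZMod 2) (v : Fin n → ZMod 2) :
    word (Fin.append u v) = word u ||| word v <<< m := by
  refine Nat.eq_of_testBit_eq fun i ↦ ?_
  rcases lt_or_ge i m with hi | hi
  · have := Fin.append_left u v ⟨i, hi⟩
    simp_all [word, Nat.testBit_ofBits, hi.not_ge, Nat.lt_add_right]
  · obtain ⟨j, rfl⟩ := Nat.exists_eq_add_of_le hi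
    rcases lt_or_ge j n with hj | hj
    · have := Fin.append_right u v ⟨j, hj⟩
      simp_all [word]
    · simp [word, Nat.testBit_ofBits, hj.not_gt]

lemma word_single (i : Fin n) : word (Pi.single i 1) = 2 ^ (i : ℕ) := by
  refine Nat.eq_of_testBit_eq fun j ↦ ?_
  rcases lt_or_ge j n with hj | hj
  · simp [word, hj, Nat.testBit_two_pow, Pi.single_apply, Fin.ext_iff, eq_comm]
  · have := i.isLt.trans_le hj
    simp [word, hj, this.ne]

/-- The number of vectors of weight less than `k` and length `n`. -/
def lightCount : ℕ → ℕ → ℕ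
  | 0, _ => 0
  | _ + 1, 0 => 1
  | k + 1, n + 1 => lightCount (k + 1) n + lightCount k n

lemma length_lightVectors (k n : ℕ) : (lightVectors k n).length = lightCount k n := by
  induction n generalizing k with
  | zero => cases k <;> rfl
  | succ n ih => cases k <;> simp [lightVectors, lightCount, ih]

/-- Prepends to `acc` the words `w + x ᵥ* G` for all `x` in `lightVectors k n` whose bit in the
truth table `mask` is set, where `G` is the matrix with the given rows. -/
def selectWords : List ℕ → ℕ → ℕ → ℕ → List ℕ → List ℕ
  | [], _, w, mask, acc => if mask = 0 then acc else w :: acc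
  | _ :: _, 0, _, _, acc => acc
  | r :: rows, k + 1, w, mask, acc =>
    if mask = 0 then acc else
      selectWords rows (k + 1) w (mask % 2 ^ lightCount (k + 1) rows.length)
        (selectWords rows k (w ^^^ r) (mask >>> lightCount (k + 1) rows.length) acc)

lemma truthTable_eq_zero_iff {α : Type*} {p : α → Bool} {l : List α} :
    truthTable p l = 0 ↔ l.filter p = [] := by
  rw [← truthTable_false l, truthTable_inj, List.filter_eq_nil_iff]
  simp

lemma selectWords_ofFn (g : Fin n → Fin m → ZMod 2) (k : ℕ) (u : Fin m → ZMod 2)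
    (p : (Fin n → ZMod 2) → Bool) (acc : List ℕ) :
    selectWords (List.ofFn fun i ↦ word (g i)) k (word u) (truthTable p (lightVectors k n)) acc =
      ((lightVectors k n).filter p).map (fun x ↦ word (u + x ᵥ* Matrix.of g)) ++ acc := by
  induction n generalizing k u acc with
  | zero =>
    cases k with
    | zero => simp [selectWords, lightVectors, truthTable_nil]
    | succ k =>
      have hM : truthTable p [![]] = 0 ↔ p ![] = false := by
        simp [truthTable_eq_zero_iff, Bool.not_eq_true]
      cases hp : p ![] <;> simp [selectWords, lightVectors, hM, hp]
  | succ n ih =>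
    cases k with
    | zero => simp [selectWords, lightVectors]
    | succ k =>
      rw [List.ofFn_succ, selectWords]
      by_cases h0 : truthTable p (lightVectors (k + 1) (n + 1)) = 0
      · simp [h0, truthTable_eq_zero_iff.1 h0]
      · have hl : lightCount (k + 1) (List.ofFn fun i : Fin n ↦ word (g i.succ)).length =
            ((lightVectors (k + 1) n).map (Matrix.vecCons 0)).length := by
          simp [length_lightVectors]
        have hcons (a : ZMod 2) (x : Fin n → ZMod 2) :
            Matrix.vecCons a x ᵥ* Matrix.of g = a • g 0 + x ᵥ* Matrix.of fun i ↦ g i.succ := by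
          ext j
          simp [Matrix.vecMul, dotProduct, Fin.sum_univ_succ]
        rw [if_neg h0, hl, lightVectors, truthTable_append_mod,
          truthTable_append_shiftRight, truthTable_map, truthTable_map, ← word_add,
          ih (fun i ↦ g i.succ), ih (fun i ↦ g i.succ)]
        simp only [List.filter_append, List.map_append, List.filter_map, List.map_map,
          List.append_assoc, Function.comp_def, hcons, zero_smul, zero_add, one_smul,
          add_assoc]

end Select

section Overlap

/-- The number with the digits `(w.testBit i).toNat`, `w ∈ L`, in base `2 ^ m`. It is extracted from
the concatenation of all words of `L` in two bitwise operations. -/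
def digitColumn (m : ℕ) (L : List ℕ) (i : ℕ) : ℕ :=
  (Nat.ofDigits (2 ^ m) L >>> i) &&& Nat.ofDigits (2 ^ m) (L.map fun _ ↦ 1)

lemma digitColumn_eq {m i : ℕ} (hi : i < m) {L : List ℕ} (hL : ∀ w ∈ L, w < 2 ^ m) :
    digitColumn m L i = Nat.ofDigits (2 ^ m) (L.map fun w ↦ (w.testBit i).toNat) := by
  induction L with
  | nil => simp [digitColumn]
  | cons w L ih =>
    rw [List.forall_mem_cons] at hL
    have h1 : 1 < 2 ^ m := Nat.one_lt_two_pow (by omega)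
    have hbit : (w.testBit i).toNat < 2 ^ m := (Bool.toNat_le _).trans_lt h1
    rw [List.map_cons, Nat.ofDigits_cons, ← ih hL.2, digitColumn, List.map_cons, Nat.ofDigits_cons,
      Nat.ofDigits_cons, digitColumn]
    generalize Nat.ofDigits (2 ^ m) L = z, Nat.ofDigits (2 ^ m) (L.map fun _ ↦ 1) = e
    simp only [add_comm _ (2 ^ m * _)]
    refine Nat.eq_of_testBit_eq fun j ↦ ?_
    rw [Nat.testBit_two_pow_mul_add _ hbit, Nat.testBit_and, Nat.testBit_shiftRight,
      Nat.testBit_two_pow_mul_add _ hL.1, Nat.testBit_two_pow_mul_add _ h1]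
    rcases lt_or_ge j m with hj | hj
    · rcases eq_or_ne j 0 with rfl | hj0
      · cases w.testBit i <;> simp [hi, hj]
      · have hone : Nat.testBit 1 j = false := by
          rw [Nat.testBit_eq_false_of_lt (Nat.one_lt_two_pow hj0)]
        cases w.testBit i <;> simp [hj, hone]
    · simp [hj.not_gt, (hj.trans (Nat.le_add_left j i)).not_gt, Nat.add_sub_assoc hj]

lemma two_pow_mul_add_and {m a b c d : ℕ} (hc : c < 2 ^ m) (hd : d < 2 ^ m) :
    (2 ^ m * a + c) &&& (2 ^ m * b + d) = 2 ^ m * (a &&& b) + (c &&& d) :=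
  Nat.eq_of_testBit_eq fun j ↦ by
    rw [Nat.testBit_and, Nat.testBit_two_pow_mul_add _ hc, Nat.testBit_two_pow_mul_add _ hd,
      Nat.testBit_two_pow_mul_add _ (Nat.and_lt_two_pow _ hd)]
    split_ifs <;> simp

lemma ofDigits_map_and_ofDigits_map {α : Type*} {m : ℕ} (hm : 0 < m) (p q : α → Bool)
    (L : List α) :
    Nat.ofDigits (2 ^ m) (L.map fun a ↦ (p a).toNat) &&&
      Nat.ofDigits (2 ^ m) (L.map fun a ↦ (q a).toNat) =
      Nat.ofDigits (2 ^ m) (L.map fun a ↦ (p a && q a).toNat) := by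
  induction L with
  | nil => simp
  | cons a L ih =>
    have hlt (b : Bool) : b.toNat < 2 ^ m :=
      (Bool.toNat_le b).trans_lt (Nat.one_lt_two_pow hm.ne')
    have hand : (p a).toNat &&& (q a).toNat = (p a && q a).toNat := by
      cases p a <;> cases q a <;> rfl
    simp only [List.map_cons, Nat.ofDigits_cons, add_comm _ (2 ^ m * _),
      two_pow_mul_add_and (hlt _) (hlt _), ih, hand]

lemma ofDigits_mod_eq_sum {m : ℕ} {L : List ℕ} (hL : L.sum < 2 ^ m - 1) :
    Nat.ofDigits (2 ^ m) L % (2 ^ m - 1) = L.sum := by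
  have h : 2 ^ m ≡ 1 [MOD 2 ^ m - 1] := Nat.modEq_sub Nat.one_le_two_pow
  rw [Nat.ofDigits_modEq' _ _ _ h L, Nat.ofDigits_one, Nat.mod_eq_of_lt hL]

lemma sum_map_toNat {α : Type*} (p : α → Bool) (L : List α) :
    (L.map fun a ↦ (p a).toNat).sum = L.countP p := by
  induction L with
  | nil => rfl
  | cons a L ih => cases h : p a <;> simp [ih, h, add_comm]

/-- The number of words of `L` in which the bits `i` and `j` are both set, provided that the words
have `N` bits and that `L` has fewer than `2 ^ (N + 1) - 1` entries: the sum of the digits in base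
`2 ^ (N + 1)` is then the residue modulo `2 ^ (N + 1) - 1`. -/
def overlap (N : ℕ) (L : List ℕ) (i j : ℕ) : ℕ :=
  (digitColumn (N + 1) L i &&& digitColumn (N + 1) L j) % (2 ^ (N + 1) - 1)

lemma overlap_map_word {N : ℕ} {L : List (Fin N → ZMod 2)} (hL : L.length < 2 ^ (N + 1) - 1)
    (i j : Fin N) : overlap N (L.map word) i j = L.countP fun v ↦ v i = 1 ∧ v j = 1 := by
  have hword : ∀ w ∈ L.map word, w < 2 ^ (N + 1) := by
    simp only [List.forall_mem_map]
    exact fun v _ ↦ (word_lt v).trans (Nat.pow_lt_pow_right one_lt_two N.lt_succ_self)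
  have hcount := sum_map_toNat (fun v : Fin N → ZMod 2 ↦ v i = 1 ∧ v j = 1) L
  rw [overlap, digitColumn_eq (by omega) hword, digitColumn_eq (by omega) hword,
    ofDigits_map_and_ofDigits_map N.succ_pos, List.map_map]
  simp only [Function.comp_def, testBit_word, ← Bool.decide_and]
  rw [ofDigits_mod_eq_sum (hcount ▸ List.countP_le_length.trans_lt hL), hcount]

end Overlap

section BooleanMatrix

variable {n : ℕ}

lemma word_ofBool (a : Fin n → Fin n → Bool) (i : Fin n) :
    word (ofBool a i) = Nat.ofBits (a i) :=
  congrArg Nat.ofBits (funext fun j ↦ by cases h : a i j <;> simp [ofBool, h])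

/-- The words of the columns of a Boolean matrix. -/
def columnWords (a : Fin n → Fin n → Bool) : List ℕ :=
  List.ofFn fun j ↦ Nat.ofBits fun i ↦ a i j

lemma overlap_columnWords (a : Fin n → Fin n → Bool) (i j : Fin n) :
    overlap n (columnWords a) i j = wt (ofBool a i * ofBool a j) := by
  have hmul : ∀ b c : ZMod 2, b * c = 1 ↔ b = 1 ∧ c = 1 := by decide
  have hcol : columnWords a = (List.ofFn (ofBool a).col).map word := by
    rw [List.map_ofFn]
    exact congrArg List.ofFn (funext fun j ↦ (word_ofBool (flip a) j).symm)
  have hlen : (List.ofFn (ofBool a).col).length < 2 ^ (n + 1) - 1 := by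
    have := n.lt_two_pow_self
    rw [List.length_ofFn, pow_succ]
    omega
  rw [hcol, overlap_map_word hlen, wt_eq_countP, List.ofFn_eq_map, List.countP_map]
  simp only [Pi.mul_apply, hmul]
  rfl

lemma wt_ofBool {a : Fin n → Fin n → Bool} (i : Fin n) :
    wt (ofBool a i) = overlap n (columnWords a) i i := by
  have h : ∀ c : ZMod 2, c * c = c := by decide
  rw [overlap_columnWords]
  exact congrArg wt (funext fun j ↦ (h _).symm)

lemma ofBool_mul_transpose {a : Fin n → Fin n → Bool}
    (h : ∀ i j : Fin n, overlap n (columnWords a) i j % 2 = if i = j then 1 else 0) :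
    ofBool a * (ofBool a)ᵀ = 1 := by
  ext i j
  change ofBool a i ⬝ᵥ ofBool a j = _
  have := h i j
  rw [overlap_columnWords] at this
  rw [Matrix.one_apply, dotProduct]
  change ∑ l, (ofBool a i * ofBool a j) l = _
  rw [← natCast_wt, ← ZMod.natCast_mod, this]
  split_ifs <;> simp

/-- The truth table of `e ≤ wt (encode (ofBool a) b x)` on `lightVectors k n`, where `e ≤ d`. -/
def weightTable (k d : ℕ) (a : Fin n → Fin n → Bool) (b : Bool) (e : ℕ) : ℕ :=
  (weightTables a b d ((coordTables k n).getD k (0, []))).getD e 0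

lemma weightTable_eq (k : ℕ) {d e : ℕ} (he : e ≤ d) (a : Fin n → Fin n → Bool) (b : Bool) :
    weightTable k d a b e =
      truthTable (fun x ↦ e ≤ wt (encode (ofBool a) (bif b then 1 else 0) x))
        (lightVectors k n) := by
  have hk : (coordTables k n).getD k (0, []) = coordTable (lightVectors k n) := by
    simp [coordTables_eq]
  rw [weightTable, hk, weightTables_coordTable]
  simp [Nat.lt_succ_of_le he]

lemma vecMul_append {m l : ℕ} (x : Fin n → ZMod 2) (f : Fin n → Fin m → ZMod 2)
    (g : Fin n → Fin l → ZMod 2) : x ᵥ* Matrix.of (fun i ↦ Fin.append (f i) (g i)) =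
      Fin.append (x ᵥ* Matrix.of f) (x ᵥ* Matrix.of g) := by
  ext j
  refine Fin.addCases (fun j ↦ ?_) (fun j ↦ ?_) j <;> simp [Matrix.vecMul, dotProduct]

lemma vecMul_of_single (x : Fin n → ZMod 2) :
    x ᵥ* Matrix.of (fun i : Fin n ↦ (Pi.single i 1 : Fin n → ZMod 2)) = x := by
  ext j
  simp [Matrix.vecMul, dotProduct, Pi.single_apply]

/-- The words of the codewords `encode (ofBool a) 0 x` with `x ∈ lightVectors k n` whose bit in the
truth table `mask` is set, followed by `acc`. -/
def selectLeft (a : Fin n → Fin n → Bool) (k mask : ℕ) (acc : List ℕ) : List ℕ :=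
  selectWords (List.ofFn fun i : Fin n ↦ 2 ^ (i : ℕ) ||| Nat.ofBits (a i) <<< n) k 0 mask acc

lemma selectLeft_truthTable (a : Fin n → Fin n → Bool) (k : ℕ) (p : (Fin n → ZMod 2) → Bool)
    (acc : List ℕ) : selectLeft a k (truthTable p (lightVectors k n)) acc =
      ((lightVectors k n).filter p).map (fun x ↦ word (encode (ofBool a) 0 x)) ++ acc := by
  have hx (x : Fin n → ZMod 2) : x ᵥ* Matrix.of (fun i : Fin n ↦
      Fin.append (Pi.single i 1) (ofBool a i)) = encode (ofBool a) 0 x := by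
    rw [vecMul_append _ _ (ofBool a), vecMul_of_single, encode, zero_add]
    rfl
  have h := selectWords_ofFn (fun i : Fin n ↦ Fin.append (Pi.single i 1) (ofBool a i)) k 0 p acc
  simpa only [selectLeft, word_append, word_single, word_ofBool, word_zero, zero_add, hx] using h

/-- The words of the codewords `encodeRight (ofBool a) 0 y` with `y ∈ lightVectors k n` whose bit in
the truth table `mask` is set, followed by `acc`. -/
def selectRight (a : Fin n → Fin n → Bool) (k mask : ℕ) (acc : List ℕ) : List ℕ :=
  selectWords (List.ofFn fun j : Fin n ↦ Nat.ofBits (flip a j) ||| 2 ^ (j : ℕ) <<< n) k 0 mask acc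

lemma selectRight_truthTable (a : Fin n → Fin n → Bool) (k : ℕ) (p : (Fin n → ZMod 2) → Bool)
    (acc : List ℕ) : selectRight a k (truthTable p (lightVectors k n)) acc =
      ((lightVectors k n).filter p).map (fun y ↦ word (encodeRight (ofBool a) 0 y)) ++ acc := by
  have hy (y : Fin n → ZMod 2) : y ᵥ* Matrix.of (fun j : Fin n ↦
      Fin.append (ofBool (flip a) j) (Pi.single j 1)) = encodeRight (ofBool a) 0 y := by
    rw [vecMul_append _ (ofBool (flip a)), vecMul_of_single, encodeRight, zero_add]
    rfl
  have h := selectWords_ofFn (fun j : Fin n ↦ Fin.append (ofBool (flip a) j) (Pi.single j 1)) k 0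
    p acc
  simpa only [selectRight, word_append, word_single, word_ofBool, word_zero, zero_add, hy] using h

end BooleanMatrix

section MinimumWords

variable {n k : ℕ} {a : Fin n → Fin n → Bool}

/-- The truth table of `wt (encode (ofBool a) b x) = d` on `lightVectors k n`. -/
def weightMask (k d : ℕ) (a : Fin n → Fin n → Bool) (b : Bool) : ℕ :=
  weightTable k (d + 1) a b d ^^^ weightTable k (d + 1) a b (d + 1)

lemma weightMask_eq (k d : ℕ) (a : Fin n → Fin n → Bool) (b : Bool) :
    weightMask k d a b =
      truthTable (fun x ↦ wt (encode (ofBool a) (bif b then 1 else 0) x) = d)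
        (lightVectors k n) := by
  have h (w : ℕ) : (decide (d ≤ w) ^^ decide (d + 1 ≤ w)) = decide (w = d) := by
    grind
  simp only [weightMask, weightTable_eq k d.le_succ, weightTable_eq k le_rfl, truthTable_xor, h]

/-- The codewords of weight `2 * k`, listed by their left half if it has weight at most `k` and by
their right half otherwise. -/
def minimumVectors (k : ℕ) (A : Matrix (Fin n) (Fin n) (ZMod 2)) : List (Fin (n + n) → ZMod 2) :=
  ((lightVectors (k + 1) n).filter fun x ↦ wt (encode A 0 x) = 2 * k).map (encode A 0) ++
    ((lightVectors k n).filter fun y ↦ wt (encode Aᵀ 0 y) = 2 * k).map (encodeRight A 0)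

lemma mem_minimumVectors {A : Matrix (Fin n) (Fin n) (ZMod 2)} (hA : A * Aᵀ = 1)
    (c : Fin (n + n) → ZMod 2) : c ∈ minimumVectors k A ↔ c ∈ code A ∧ wt c = 2 * k := by
  have hright (y : Fin n → ZMod 2) : encodeRight A 0 y ∈ code A := by
    rw [← SetLike.mem_coe, coe_code, ← range_encodeRight hA (Matrix.zero_vecMul _)]
    exact ⟨y, rfl⟩
  simp only [minimumVectors, List.mem_append, List.mem_map, List.mem_filter, mem_lightVectors,
    decide_eq_true_eq]
  constructor
  · rintro (⟨x, ⟨-, hx⟩, rfl⟩ | ⟨y, ⟨-, hy⟩, rfl⟩)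
    · exact ⟨⟨x, rfl⟩, hx⟩
    · exact ⟨hright y, by rw [wt_encodeRight, hy]⟩
  · rintro ⟨⟨x, rfl⟩, hx⟩
    change wt (encode A 0 x) = 2 * k at hx
    rcases Nat.lt_or_ge (wt x) (k + 1) with hk | hk
    · exact .inl ⟨x, ⟨hk, hx⟩, rfl⟩
    · have heq := encode_eq_encodeRight hA (Matrix.zero_vecMul _) x
      refine .inr ⟨0 + x ᵥ* A, ⟨?_, ?_⟩, heq.symm⟩
      · rw [wt_encode] at hx
        omega
      · rw [← wt_encodeRight, ← heq, hx]

lemma nodup_minimumVectors {A : Matrix (Fin n) (Fin n) (ZMod 2)} (hA : A * Aᵀ = 1) :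
    (minimumVectors k A).Nodup := by
  refine (((nodup_lightVectors _ _).filter _).map (encode_injective A 0)).append
    (((nodup_lightVectors _ _).filter _).map (encodeRight_injective A 0)) ?_
  simp only [List.disjoint_left, List.mem_map, List.mem_filter, mem_lightVectors,
    decide_eq_true_eq]
  rintro _ ⟨x, ⟨hxk, hx⟩, rfl⟩ ⟨y, ⟨hyk, -⟩, hy⟩
  rw [encode_eq_encodeRight hA (Matrix.zero_vecMul _)] at hy
  rw [encodeRight_injective A 0 hy] at hyk
  rw [wt_encode] at hx
  omega

lemma pairCount_code {A : Matrix (Fin n) (Fin n) (ZMod 2)} (hA : A * Aᵀ = 1)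
    (i j : Fin (n + n)) : pairCount (code A) (2 * k) i j =
      (minimumVectors k A).countP fun c ↦ c i = 1 ∧ c j = 1 := by
  classical
  rw [pairCount, List.countP_eq_length_filter,
    ← List.toFinset_card_of_nodup ((nodup_minimumVectors hA).filter _)]
  congr 1
  ext c
  simp [mem_minimumVectors hA, and_assoc]

/-- The words of the codewords of weight `2 * k`. -/
def minimumWords (k : ℕ) (a : Fin n → Fin n → Bool) : List ℕ :=
  selectLeft a (k + 1) (weightMask (k + 1) (2 * k) a false)
    (selectRight a k (weightMask k (2 * k) (flip a) false) [])

lemma minimumWords_eq (k : ℕ) (a : Fin n → Fin n → Bool) :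
    minimumWords k a = (minimumVectors k (ofBool a)).map word := by
  rw [minimumWords, weightMask_eq, weightMask_eq, selectRight_truthTable, selectLeft_truthTable,
    minimumVectors, List.map_append, List.map_map, List.map_map, List.append_nil]
  rfl

lemma overlap_minimumWords [NeZero n] (hA : ofBool a * (ofBool a)ᵀ = 1) (i j : Fin (n + n)) :
    overlap (n + n) (minimumWords k a) i j = pairCount (code (ofBool a)) (2 * k) i j := by
  have hlen : (minimumVectors k (ofBool a)).length < 2 ^ (n + n + 1) - 1 := by
    have hcard := (nodup_minimumVectors (k := k) hA).length_le_card
    have hpos := Nat.one_lt_two_pow (NeZero.ne (n + n))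
    simp only [Fintype.card_pi, ZMod.card, prod_const, card_univ, Fintype.card_fin] at hcard
    rw [pow_succ]
    omega
  rw [minimumWords_eq, overlap_map_word hlen, pairCount_code hA]

end MinimumWords

section Certificate

variable {n k m d v : ℕ} {a : Fin n → Fin n → Bool} {b : Bool}

/-- The check that the nonzero vectors `encode (ofBool a) b x` with `wt x < k` have weight at
least `d`. -/
def IsLightFree (k d : ℕ) (a : Fin n → Fin n → Bool) (b : Bool) : Prop :=
  weightTable k (d + 1) a b 1 = weightTable k (d + 1) a b d

lemma IsLightFree.le_wt (h : IsLightFree k d a b) (x : Fin n → ZMod 2) (hx : wt x < k)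
    (hne : encode (ofBool a) (bif b then 1 else 0) x ≠ 0) :
    d ≤ wt (encode (ofBool a) (bif b then 1 else 0) x) := by
  rw [IsLightFree, weightTable_eq k (Nat.le_add_left 1 d), weightTable_eq k d.le_succ,
    truthTable_inj] at h
  have hpos : 1 ≤ wt (encode (ofBool a) (bif b then 1 else 0) x) := hammingNorm_pos_iff.2 hne
  simpa only [hpos, decide_true, true_eq_decide_iff] using h x ((mem_lightVectors k x).2 hx)

lemma exists_wt_encode_eq (h : weightMask k d a b ≠ 0) :
    ∃ x, wt (encode (ofBool a) (bif b then 1 else 0) x) = d := by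
  rw [weightMask_eq, Ne, truthTable_eq_zero_iff, List.filter_eq_nil_iff] at h
  push Not at h
  obtain ⟨x, -, hx⟩ := h
  exact ⟨x, by simpa using hx⟩

lemma minWtSet_range_encode_ofBool [NeZero k] (hA : ofBool a * (ofBool a)ᵀ = 1)
    (hb : (bif b then 1 else 0 : Fin n → ZMod 2) ᵥ* (ofBool a)ᵀ = bif b then 1 else 0)
    (hkm : k ≤ m) (hleft : IsLightFree m (2 * k) a b)
    (hright : IsLightFree k (2 * k) (flip a) b) (hmask : weightMask m (2 * k) a b ≠ 0) :
    minWtSet (Set.range (encode (ofBool a) (bif b then 1 else 0))) = 2 * k := by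
  refine minWtSet_range_encode hA hb (fun x hx ↦ hleft.le_wt x (hx.trans_le hkm))
    hright.le_wt ?_
  obtain ⟨x, hx⟩ := exists_wt_encode_eq hmask
  refine ⟨x, hammingNorm_ne_zero_iff.1 ?_, hx⟩
  change wt _ ≠ 0
  rw [hx]
  exact NeZero.ne _

/-- Conditions, decidable by computation in the kernel, under which `[I | A]` with `A = ofBool a`
generates a singly even self-dual code: the rows of `A` are orthonormal and of weight `1` modulo
`4`, the code and its shadow have minimum weight `2 * k`, and `pairCountSq` has the value `v`. -/
def IsCertificate (k : ℕ) (a : Fin n → Fin n → Bool) (v : ℕ) : Prop :=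
  (∀ i j : Fin n, overlap n (columnWords a) i j % 2 = if i = j then 1 else 0) ∧
  (∀ i : Fin n, overlap n (columnWords a) i i % 4 = 1) ∧
  (IsLightFree (k + 1) (2 * k) a false ∧ IsLightFree k (2 * k) (flip a) false ∧
    weightMask (k + 1) (2 * k) a false ≠ 0) ∧
  (IsLightFree k (2 * k) a true ∧ IsLightFree k (2 * k) (flip a) true ∧
    weightMask k (2 * k) a true ≠ 0) ∧
  ∑ i : Fin (n + n), ∑ j : Fin (n + n), overlap (n + n) (minimumWords k a) i j ^ 2 = v

instance : Decidable (IsLightFree k d a b) :=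
  inferInstanceAs (Decidable (_ = _))

instance : Decidable (IsCertificate k a v) :=
  inferInstanceAs (Decidable (_ ∧ _))

lemma IsCertificate.mul_transpose (h : IsCertificate k a v) : ofBool a * (ofBool a)ᵀ = 1 :=
  ofBool_mul_transpose h.1

lemma IsCertificate.wt_row (h : IsCertificate k a v) (i : Fin n) : wt (ofBool a i) % 4 = 1 := by
  rw [wt_ofBool, h.2.1]

theorem IsCertificate.isSinglyEvenSelfDual_code [NeZero n] (h : IsCertificate k a v) :
    IsSinglyEvenSelfDual (code (ofBool a)) :=
  BinaryCode.isSinglyEvenSelfDual_code h.mul_transpose h.wt_row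

theorem IsCertificate.minWt_code [NeZero k] (h : IsCertificate k a v) :
    minWt (code (ofBool a)) = 2 * k := by
  have ⟨_, _, ⟨hleft, hright, hmask⟩, _⟩ := h
  exact minWtSet_range_encode_ofBool (b := false) h.mul_transpose (Matrix.zero_vecMul _)
    k.le_succ hleft hright hmask

theorem IsCertificate.minWtSet_shadow_code [NeZero n] [NeZero k] (h : IsCertificate k a v) :
    minWtSet (shadow (code (ofBool a))) = 2 * k := by
  have ⟨_, _, _, ⟨hleft, hright, hmask⟩, _⟩ := h
  rw [shadow_code h.mul_transpose h.wt_row]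
  exact minWtSet_range_encode_ofBool (b := true) h.mul_transpose (one_vecMul_transpose h.wt_row)
    le_rfl hleft hright hmask

theorem IsCertificate.pairCountSq_code [NeZero n] (h : IsCertificate k a v) :
    pairCountSq (code (ofBool a)) (2 * k) = v := by
  rw [← h.2.2.2.2, pairCountSq]
  simp only [overlap_minimumWords h.mul_transpose]

end Certificate

section Codes

/-- The `32 × 32` matrix of `4 × 4` circulant blocks of size `8` whose first rows are the sixteen
bytes of `K`, read row by row from the least significant one; modulo `8`, `j + 7 * i` is `j - i`. -/
def quasiCyclic (K : ℕ) (i j : Fin 32) : Bool :=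
  K.testBit (32 * (i / 8) + 8 * (j / 8) + (j + 7 * i) % 8)

/-- The sixteen circulant blocks of each code, with the value of `pairCountSq` at weight `12`. -/
def codeData : Fin 25 → ℕ × ℕ :=
  ![(0x5be0e0821a88769269d59ba2029493d5, 11479296),
    (0x859d04d867581b20806368dc1b0437a1, 11527424),
    (0x3ef1310f019cd6a2fd2c88f4d8f2c2b6, 11448064),
    (0xa16133fe1531a18d1b857cd364d2e6b3, 11448832),
    (0x5a0e3ed91c5db5665df78252a75fd67a, 11428352),
    (0x80492a5f0d5aa2945a0ee0c87c239ccd, 11488256),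
    (0x554a31a1f2c791aadc5239e638af29e3, 11432960),
    (0xf72c55d05de094446d145e5e2779e67f, 11467008),
    (0xd9e3644e676ce67007376337c9133ece, 11504128),
    (0x523380c758d007e4bfa19c192da2d5d9, 11436288),
    (0xa83c976db4b30d9ea46b6ec386491e8a, 11432192),
    (0x7c82d5201eb60834269b936b6b9d4a78, 11474688),
    (0xdf69eace7d9b834c58759cb373fe5dd2, 11450624),
    (0xa5dc37313b1b85406d0ee0be0ecd1158, 11457280),
    (0x4900bfe0bca43211cbae93236cdad0a7, 11463680),
    (0xba6128193187d3e5e43416705ec4c144, 11444480),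
    (0xdde30bc43e07dcb4ef41dfb525707d8f, 11471872),
    (0xc87c265f2f224c4996ae4ae5f26b9361, 11505152),
    (0x61a431558cf098620464d8797d1ce0f1, 11456512),
    (0x383183b4866c62a2549b9ce9b48f23f8, 11466240),
    (0x45d68f33ec66970ec279d86bafc41a01, 11523072),
    (0xe95058253ebc44e62c8c2cc327fbea1f, 11493120),
    (0xe03608ae2a02cd96830baf9766cd9ee0, 11447552),
    (0x0fc437eccd67c4d28983287376504962, 11458048),
    (0xad1fae776c6116a479b39c5461559de3, 11435520)]

set_option maxHeartbeats 2000000 in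
-- The kernel examines about two million vectors for each of the 25 matrices.
lemma isCertificate_codeData (i : Fin 25) :
    IsCertificate 6 (quasiCyclic (codeData i).1) (codeData i).2 := by
  fin_cases i <;> decide +kernel

lemma injective_codeData_snd : Function.Injective fun i ↦ (codeData i).2 := by
  decide +kernel

/-- The `[64, 32, 12]` codes witnessing the theorem. -/
def sExtremalCode (i : Fin 25) : Submodule (ZMod 2) (Fin 64 → ZMod 2) :=
  code (ofBool (quasiCyclic (codeData i).1))

end Codes

end BinaryCode

open BinaryCode

/-- There exist at least 25 pairwise inequivalent s-extremal singly even self-dual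
`[64, 32, 12]` codes: singly even self-dual codes of length 64 with minimum weight 12
whose shadows have minimum weight 12. -/
theorem exists_25_sExtremal_64 :
    ∃ f : Fin 25 → Submodule (ZMod 2) (Fin 64 → ZMod 2),
      (∀ i, IsSinglyEvenSelfDual (f i) ∧
        Module.finrank (ZMod 2) (f i) = 32 ∧
        minWt (f i) = 12 ∧
        minWtSet (shadow (f i)) = 12) ∧
      ∀ i j, i ≠ j → ¬ CodeEquiv (f i) (f j) := by
  refine ⟨sExtremalCode, fun i ↦ ?_, fun i j hij h ↦ hij (injective_codeData_snd ?_)⟩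
  · have hi := isCertificate_codeData i
    exact ⟨hi.isSinglyEvenSelfDual_code, finrank_code (n := 32) _, hi.minWt_code,
      hi.minWtSet_shadow_code⟩
  · calc (codeData i).2
      _ = pairCountSq (sExtremalCode i) 12 := (isCertificate_codeData i).pairCountSq_code.symm
      _ = pairCountSq (sExtremalCode j) 12 := pairCountSq_eq_of_codeEquiv h 12
      _ = (codeData j).2 := (isCertificate_codeData j).pairCountSq_code
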